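/- Let n > 2 and let G be a finite group generated by n pairwise distinct non-identity elements g1, …, gn. Then there exists a finite simple graph Γ on exactly (2n+6)·|G| vertices that is cubic (3-regular) and whose automorphism group is isomorphic to G. -/

import Mathlib

/-!
Put a voltage in `G` on each dart of a finite graph `B`. The derived graph, on `B × G`, covers `B`
and `G` acts on it by left translations. Lifts of walks being unique, these are all the
automorphisms that preserve the fibres, provided that the derived graph is connected.

Take for `B` a cubic graph consisting of a pentagonal house with a chord under its roof and a ladder
with `n` rungs, the `i`-th rung having voltage `g i` and all other edges voltage `1`. If the voltage
of the last rung is not `1`, the only triangles of the derived graph are the lifts of the gable of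
the house, and the roof is the only vertex of the gable whose lifts lie on no 4-cycle. Hence an
automorphism preserves the fibre of the roof; it cannot exchange the two eaves, and since lifted
neighbours can be told apart one by one, it preserves every fibre.
-/

theorem exists_apply_ne_one_of_closure_range_eq_top {ι G : Type*} [Group G] [Nontrivial G]
    {g : ι → G} (hgen : Subgroup.closure (Set.range g) = ⊤) : ∃ i, g i ≠ 1 := by
  by_contra! h
  have hrange : Set.range g ⊆ {1} := Set.range_subset_iff.2 h
  exact bot_ne_top ((Subgroup.closure_eq_bot_iff.2 hrange).symm.trans hgen)

section Invariants

variable {V W : Type*} {Γ : SimpleGraph V} {Δ : SimpleGraph W}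

/-- The vertex `v` lies on a 3-cycle of `Γ`. -/
def OnTriangle (Γ : SimpleGraph V) (v : V) : Prop :=
  ∃ a b, Γ.Adj v a ∧ Γ.Adj v b ∧ Γ.Adj a b

/-- The vertex `v` lies on a 4-cycle of `Γ`, not necessarily induced; `b` is the vertex opposite
to `v`. -/
def OnSquare (Γ : SimpleGraph V) (v : V) : Prop :=
  ∃ a b c, Γ.Adj v a ∧ Γ.Adj a b ∧ Γ.Adj b c ∧ Γ.Adj c v ∧ a ≠ c ∧ b ≠ v

theorem onTriangle_apply_iff (φ : Γ ≃g Δ) (v : V) : OnTriangle Δ (φ v) ↔ OnTriangle Γ v := by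
  simp [OnTriangle, φ.surjective.exists, φ.map_adj_iff]

theorem onSquare_apply_iff (φ : Γ ≃g Δ) (v : V) : OnSquare Δ (φ v) ↔ OnSquare Γ v := by
  simp [OnSquare, φ.surjective.exists, φ.map_adj_iff]

/-- Isomorphic graphs have isomorphic automorphism groups, by conjugation. -/
def graphAutCongr (ψ : Γ ≃g Δ) : (Γ ≃g Γ) ≃* (Δ ≃g Δ) where
  toFun φ := (ψ.symm.trans φ).trans ψ
  invFun φ := (ψ.trans φ).trans ψ.symm
  left_inv φ := by ext v; simp
  right_inv φ := by ext v; simp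
  map_mul' φ₁ φ₂ := by ext v; simp

theorem exists_isRegularOfDegree_aut_mulEquiv_of_equiv [Γ.LocallyFinite] {d : ℕ} {G : Type*}
    [Group G] (ε : V ≃ W) (hreg : Γ.IsRegularOfDegree d) (haut : Nonempty ((Γ ≃g Γ) ≃* G)) :
    ∃ (Δ : SimpleGraph W) (_ : Δ.LocallyFinite),
      Δ.IsRegularOfDegree d ∧ Nonempty ((Δ ≃g Δ) ≃* G) := by
  let ψ := SimpleGraph.Iso.map ε Γ
  let hfin : (Γ.map ε).LocallyFinite := fun w ↦
    Fintype.ofEquiv _ (ψ.symm.mapNeighborSet w).symm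
  refine ⟨Γ.map ε, hfin, fun w ↦ ?_, haut.map (graphAutCongr ψ).symm.trans⟩
  rw [← ψ.symm.degree_eq, hreg]

end Invariants

/-- A graph on `K` with a voltage in `G` on each dart, opposite darts having inverse voltages.
Voltages are total functions; only those on adjacent pairs matter. -/
structure VoltageGraph (K G : Type*) [Group G] extends SimpleGraph K where
  voltage : K → K → G
  voltage_swap (u v : K) : voltage v u = (voltage u v)⁻¹

namespace VoltageGraph

variable {K G : Type*} [Group G] (B : VoltageGraph K G)

/-- The derived graph of a voltage graph: a dart from `u` to `v` of voltage `s` lifts to the darts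
from `(u, x)` to `(v, x * s)`. -/
def derived : SimpleGraph (K × G) where
  Adj p q := B.Adj p.1 q.1 ∧ q.2 = p.2 * B.voltage p.1 q.1
  symm := ⟨fun p q h ↦ ⟨h.1.symm, by rw [h.2, B.voltage_swap p.1 q.1, mul_inv_cancel_right]⟩⟩
  loopless := ⟨fun p h ↦ B.loopless.irrefl p.1 h.1⟩

variable {B}

theorem derived_adj {p q : K × G} :
    B.derived.Adj p q ↔ B.Adj p.1 q.1 ∧ q.2 = p.2 * B.voltage p.1 q.1 :=
  Iff.rfl

theorem eq_of_derived_adj {p q q' : K × G} (h : B.derived.Adj p q) (h' : B.derived.Adj p q')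
    (hfst : q.1 = q'.1) : q = q' :=
  Prod.ext hfst (by rw [h.2, h'.2, hfst])

theorem derived_adj_lift {u v : K} (h : B.Adj u v) (x : G) :
    B.derived.Adj (u, x) (v, x * B.voltage u v) :=
  ⟨h, rfl⟩

section Local

variable (B) in
/-- The covering projection `K × G → K` is bijective on neighbourhoods. -/
def derivedNeighborSetEquiv (p : K × G) : B.derived.neighborSet p ≃ B.neighborSet p.1 where
  toFun q := ⟨q.1.1, q.2.1⟩
  invFun v := ⟨(v, p.2 * B.voltage p.1 v), v.2, rfl⟩
  left_inv q := Subtype.ext (Prod.ext rfl q.2.2.symm)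
  right_inv _ := rfl

instance [B.LocallyFinite] : B.derived.LocallyFinite := fun p ↦
  Fintype.ofEquiv _ (B.derivedNeighborSetEquiv p).symm

theorem isRegularOfDegree_derived [B.LocallyFinite] {d : ℕ} (h : B.IsRegularOfDegree d) :
    B.derived.IsRegularOfDegree d := fun p ↦ by
  rw [← SimpleGraph.card_neighborSet_eq_degree, Fintype.card_congr (B.derivedNeighborSetEquiv p),
    SimpleGraph.card_neighborSet_eq_degree, h]

theorem onTriangle_derived_iff {p : K × G} :
    OnTriangle B.derived p ↔ ∃ a b, B.Adj p.1 a ∧ B.Adj p.1 b ∧ B.Adj a b ∧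
      B.voltage p.1 a * B.voltage a b = B.voltage p.1 b := by
  simp only [OnTriangle, Prod.exists, derived_adj]
  constructor
  · rintro ⟨a, _, b, _, ⟨ha, rfl⟩, ⟨hb, rfl⟩, hab, hvol⟩
    exact ⟨a, b, ha, hb, hab, by simpa [mul_assoc, eq_comm] using hvol⟩
  · rintro ⟨a, b, ha, hb, hab, hvol⟩
    exact ⟨a, _, b, _, ⟨ha, rfl⟩, ⟨hb, rfl⟩, hab, by rw [mul_assoc, hvol]⟩

theorem onSquare_of_onSquare_derived {p : K × G} (h : OnSquare B.derived p) :
    OnSquare B.toSimpleGraph p.1 := by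
  obtain ⟨a, b, c, hpa, hab, hbc, hcp, hac, hbp⟩ := h
  exact ⟨a.1, b.1, c.1, hpa.1, hab.1, hbc.1, hcp.1,
    fun h ↦ hac (eq_of_derived_adj hpa hcp.symm h),
    fun h ↦ hbp (eq_of_derived_adj hab hpa.symm h)⟩

end Local

section Fibers

/-- The fibre of the derived graph over `u` is mapped into itself by `φ`. -/
def PreservesFiber (φ : B.derived ≃g B.derived) (u : K) : Prop :=
  ∀ x, (φ (u, x)).1 = u

/-- The neighbours of `φ (u, x)` lie over pairwise distinct vertices, and all but one of these
vertices are taken by known images. -/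
theorem PreservesFiber.of_adj {φ : B.derived ≃g B.derived} {u v : K} (hu : PreservesFiber φ u)
    (huv : B.Adj u v) (h : ∀ w, B.Adj u w → w ≠ v → PreservesFiber φ w) :
    PreservesFiber φ v := by
  intro y
  obtain ⟨x, hx⟩ : ∃ x, B.derived.Adj (u, x) (v, y) :=
    ⟨_, (derived_adj_lift huv.symm y).symm⟩
  have himage : B.derived.Adj (φ (u, x)) (φ (v, y)) := φ.map_adj_iff.2 hx
  have huw : B.Adj u (φ (v, y)).1 := hu x ▸ himage.1
  by_contra hne
  have hw := h _ huw hne (x * B.voltage u (φ (v, y)).1)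
  have hlift := φ.map_adj_iff.2 (derived_adj_lift huw x)
  exact hne (congrArg Prod.fst (φ.injective (eq_of_derived_adj hlift himage hw)))

theorem iso_eq_of_preconnected (hconn : B.derived.Preconnected) {φ ψ : B.derived ≃g B.derived}
    (hfst : ∀ q, (φ q).1 = (ψ q).1) {p : K × G} (hp : φ p = ψ p) : φ = ψ := by
  ext1 q
  have hpq := (SimpleGraph.reachable_iff_reflTransGen p q).1 (hconn p q)
  induction hpq with
  | refl => exact hp
  | tail _ hadj ih =>
    have hφ := φ.map_adj_iff.2 hadj
    rw [ih] at hφ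
    exact eq_of_derived_adj hφ (ψ.map_adj_iff.2 hadj) (hfst _)

variable (B) in
/-- The action of `G` on the derived graph by left translation of the fibres. -/
def translate : G →* (B.derived ≃g B.derived) where
  toFun z :=
    { Equiv.prodCongr (Equiv.refl K) (Equiv.mulLeft z) with
      map_rel_iff' := by simp [derived_adj, mul_assoc] }
  map_one' := by ext p <;> simp
  map_mul' z₁ z₂ := by ext p <;> simp [mul_assoc]

@[simp]
theorem translate_apply (z : G) (p : K × G) : B.translate z p = (p.1, z * p.2) :=
  rfl

theorem translate_bijective [Nonempty K] (hconn : B.derived.Preconnected)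
    (hfib : ∀ (φ : B.derived ≃g B.derived) u, PreservesFiber φ u) :
    Function.Bijective B.translate := by
  obtain ⟨u⟩ := ‹Nonempty K›
  constructor
  · intro z₁ z₂ h
    simpa using congrArg (fun φ : B.derived ≃g B.derived ↦ (φ (u, 1)).2) h
  · intro φ
    refine ⟨(φ (u, 1)).2, iso_eq_of_preconnected hconn (p := (u, 1)) ?_ ?_⟩
    · exact fun q ↦ (hfib φ q.1 q.2).symm
    · ext <;> simp [hfib φ u 1]

theorem derived_preconnected {S : Set G} (hS : Subgroup.closure S = ⊤) (u : K)
    (hfib : ∀ v x, B.derived.Reachable (u, x) (v, x))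
    (hgen : ∀ s ∈ S, ∀ x, B.derived.Reachable (u, x) (u, x * s)) :
    B.derived.Preconnected := by
  have hmul (y : G) : ∀ x, B.derived.Reachable (u, x) (u, x * y) := by
    induction (hS ▸ Subgroup.mem_top y : y ∈ Subgroup.closure S) using
      Subgroup.closure_induction with
    | mem s hs => exact hgen s hs
    | one => simp
    | mul a b _ _ ha hb => exact fun x ↦ mul_assoc x a b ▸ (ha x).trans (hb (x * a))
    | inv a _ ha => exact fun x ↦ by simpa using (ha (x * a⁻¹)).symm
  rintro ⟨v, x⟩ ⟨w, y⟩
  have hxy : B.derived.Reachable (u, x) (u, y) := by simpa using hmul (x⁻¹ * y) x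
  exact (hfib v x).symm.trans (hxy.trans (hfib w y))

end Fibers

end VoltageGraph

/-- The vertices of the base graph: a house graph with its roof, two eaves and two feet, two rails
of `m + 1` vertices each, `rail false` starting at the roof and `rail true` at the left foot, and a
joint at which the rails and the right foot meet. -/
inductive GadgetVertex (m : ℕ) : Type
  | roof | eaveL | eaveR | footL | footR | joint
  | rail (b : Bool) (i : Fin (m + 1))
  deriving DecidableEq

namespace GadgetVertex

variable {m : ℕ}

/-- The neighbour of `rail b i` towards the house. -/
def railPrev (b : Bool) : Fin (m + 1) → GadgetVertex m :=
  Fin.cases (bif b then footL else roof) fun i ↦ rail b i.castSucc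

/-- The neighbour of `rail b i` towards the joint. -/
def railNext (b : Bool) : Fin (m + 1) → GadgetVertex m :=
  Fin.lastCases joint fun i ↦ rail b i.succ

/-- The three neighbours of each vertex in the base graph; `rail false i` and `rail true i` are
joined by a rung. -/
def neighbors : GadgetVertex m → Finset (GadgetVertex m)
  | roof => {eaveL, eaveR, rail false 0}
  | eaveL => {roof, eaveR, footL}
  | eaveR => {roof, eaveL, footR}
  | footL => {eaveL, footR, rail true 0}
  | footR => {eaveR, footL, joint}
  | joint => {footR, rail false (Fin.last m), rail true (Fin.last m)}
  | rail b i => {railPrev b i, railNext b i, rail (!b) i}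

@[simp]
theorem railPrev_zero (b : Bool) :
    railPrev b (0 : Fin (m + 1)) = bif b then footL else roof :=
  rfl

@[simp]
theorem railPrev_succ (b : Bool) (i : Fin m) : railPrev b i.succ = rail b i.castSucc :=
  rfl

@[simp]
theorem railNext_last (b : Bool) : railNext b (Fin.last m) = joint :=
  Fin.lastCases_last

@[simp]
theorem railNext_castSucc (b : Bool) (i : Fin m) : railNext b i.castSucc = rail b i.succ :=
  Fin.lastCases_castSucc i

theorem mem_neighbors_symm {u v : GadgetVertex m} (h : v ∈ neighbors u) : u ∈ neighbors v := by
  cases u with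
  | rail b i =>
    simp only [neighbors, Finset.mem_insert, Finset.mem_singleton] at h
    rcases h with rfl | rfl | rfl
    · cases i using Fin.cases <;> cases b <;> simp [neighbors]
    · cases i using Fin.lastCases <;> cases b <;> simp [neighbors]
    · simp [neighbors]
  | _ =>
    simp only [neighbors, Finset.mem_insert, Finset.mem_singleton] at h
    rcases h with rfl | rfl | rfl <;> simp [neighbors]

theorem notMem_neighbors_self (u : GadgetVertex m) : u ∉ neighbors u := by
  cases u with
  | rail b i =>
    have hprev : rail b i ≠ railPrev b i := by
      cases i using Fin.cases <;> cases b <;> simp [Fin.ext_iff]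
    have hnext : rail b i ≠ railNext b i := by
      cases i using Fin.lastCases <;> simp [Fin.ext_iff]
    simp [neighbors, hprev, hnext]
  | _ => simp [neighbors]

theorem mem_neighbors_comm {u v : GadgetVertex m} : v ∈ neighbors u ↔ u ∈ neighbors v :=
  ⟨mem_neighbors_symm, mem_neighbors_symm⟩

theorem railPrev_eq_rail_iff {b c : Bool} {i j : Fin (m + 1)} :
    railPrev b i = rail c j ↔ b = c ∧ j.val + 1 = i.val := by
  cases i using Fin.cases with
  | zero => cases b <;> simp
  | succ i => simp [Fin.ext_iff, eq_comm]

theorem railNext_eq_rail_iff {b c : Bool} {i j : Fin (m + 1)} :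
    railNext b i = rail c j ↔ b = c ∧ i.val + 1 = j.val := by
  cases i using Fin.lastCases with
  | last => simp [j.isLt.ne']
  | cast i => simp [Fin.ext_iff]

@[simp]
theorem mem_neighbors_roof {v : GadgetVertex m} :
    v ∈ neighbors roof ↔ v = eaveL ∨ v = eaveR ∨ v = rail false 0 := by
  simp [neighbors]

@[simp]
theorem mem_neighbors_eaveL {v : GadgetVertex m} :
    v ∈ neighbors eaveL ↔ v = roof ∨ v = eaveR ∨ v = footL := by
  simp [neighbors]

@[simp]
theorem mem_neighbors_eaveR {v : GadgetVertex m} :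
    v ∈ neighbors eaveR ↔ v = roof ∨ v = eaveL ∨ v = footR := by
  simp [neighbors]

@[simp]
theorem mem_neighbors_footL {v : GadgetVertex m} :
    v ∈ neighbors footL ↔ v = eaveL ∨ v = footR ∨ v = rail true 0 := by
  simp [neighbors]

@[simp]
theorem mem_neighbors_footR {v : GadgetVertex m} :
    v ∈ neighbors footR ↔ v = eaveR ∨ v = footL ∨ v = joint := by
  simp [neighbors]

@[simp]
theorem mem_neighbors_joint {v : GadgetVertex m} :
    v ∈ neighbors joint ↔ v = footR ∨ v = rail false (Fin.last m) ∨ v = rail true (Fin.last m) := by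
  simp [neighbors]

@[simp]
theorem mem_neighbors_rail {b : Bool} {i : Fin (m + 1)} {v : GadgetVertex m} :
    v ∈ neighbors (rail b i) ↔
      match v with
      | roof => b = false ∧ i = 0
      | footL => b = true ∧ i = 0
      | joint => i = Fin.last m
      | rail c j => (b = c ∧ (j.val + 1 = i.val ∨ i.val + 1 = j.val)) ∨ c = !b ∧ i = j
      | _ => False := by
  cases v with
  | rail c j =>
    simp only [neighbors, Finset.mem_insert, Finset.mem_singleton, eq_comm (a := rail c j),
      railPrev_eq_rail_iff, railNext_eq_rail_iff, rail.injEq]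
    grind
  | _ => rw [mem_neighbors_comm]; cases b <;> simp

theorem railPrev_ne_joint (b : Bool) (i : Fin (m + 1)) : railPrev b i ≠ joint := by
  cases i using Fin.cases <;> cases b <;> simp

theorem railPrev_ne_railNext (b c : Bool) (i : Fin (m + 1)) : railPrev b i ≠ railNext c i := by
  cases i using Fin.lastCases with
  | last => simpa using railPrev_ne_joint b (Fin.last m)
  | cast i =>
    rw [railNext_castSucc, Ne, railPrev_eq_rail_iff]
    simp only [Fin.val_succ, Fin.val_castSucc]
    omega

theorem card_neighbors (u : GadgetVertex m) : (neighbors u).card = 3 := by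
  cases u with
  | rail b i =>
    have hprev : railPrev b i ≠ rail (!b) i := by simp [railPrev_eq_rail_iff]
    have hnext : railNext b i ≠ rail (!b) i := by simp [railNext_eq_rail_iff]
    exact Finset.card_eq_three.2 ⟨_, _, _, railPrev_ne_railNext b b i, hprev, hnext, rfl⟩
  | _ => exact Finset.card_eq_three.2 ⟨_, _, _, by simp, by simp, by simp, rfl⟩

/-- The six vertices off the rails, followed by the rails. -/
def equivSum : GadgetVertex m ≃ Fin 6 ⊕ Bool × Fin (m + 1) where
  toFun
    | roof => .inl 0
    | eaveL => .inl 1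
    | eaveR => .inl 2
    | footL => .inl 3
    | footR => .inl 4
    | joint => .inl 5
    | rail b i => .inr (b, i)
  invFun := Sum.elim ![roof, eaveL, eaveR, footL, footR, joint] fun p ↦ rail p.1 p.2
  left_inv u := by cases u <;> rfl
  right_inv := by
    rintro (k | _)
    · fin_cases k <;> rfl
    · rfl

/-- An enumeration of the vertices, through which the graph is moved to a prescribed vertex set. -/
noncomputable def equivFin : GadgetVertex m ≃ Fin (2 * (m + 1) + 6) :=
  equivSum.trans (Fintype.equivFinOfCardEq (by simp [add_comm]))

/-- The triangle of the house. -/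
def gable : Finset (GadgetVertex m) :=
  {roof, eaveL, eaveR}

@[simp]
theorem mem_gable {u : GadgetVertex m} : u ∈ gable ↔ u = roof ∨ u = eaveL ∨ u = eaveR := by
  simp [gable]

theorem eq_joint_or_eq_joint_of_triangle_rail {b : Bool} {i : Fin (m + 1)} {u v : GadgetVertex m}
    (hu : u ∈ neighbors (rail b i)) (hv : v ∈ neighbors (rail b i)) (huv : v ∈ neighbors u) :
    i = Fin.last m ∧ (u = joint ∧ v = rail (!b) i ∨ u = rail (!b) i ∧ v = joint) := by
  rw [mem_neighbors_rail] at hu hv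
  cases u <;> cases v <;> grind [mem_neighbors_roof, mem_neighbors_footL, mem_neighbors_joint,
    mem_neighbors_rail]

end GadgetVertex

section Construction

open GadgetVertex VoltageGraph

variable {m : ℕ} {G : Type*} [Group G]

/-- The base graph of the construction: the rung from `rail false i` to `rail true i` has voltage
`g i`, all other darts in this direction have voltage `1`. -/
def gadget (g : Fin (m + 1) → G) : VoltageGraph (GadgetVertex m) G where
  Adj u v := v ∈ neighbors u
  symm := ⟨fun _ _ ↦ mem_neighbors_symm⟩
  loopless := ⟨notMem_neighbors_self⟩
  voltage
    | rail false i, rail true _ => g i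
    | rail true _, rail false i => (g i)⁻¹
    | _, _ => 1
  voltage_swap u v := by
    rcases u with _ | _ | _ | _ | _ | _ | ⟨_ | _, i⟩ <;>
      rcases v with _ | _ | _ | _ | _ | _ | ⟨_ | _, j⟩ <;> simp

namespace gadget

section Local

variable {g : Fin (m + 1) → G}

theorem adj_iff {u v : GadgetVertex m} : (gadget g).Adj u v ↔ v ∈ neighbors u :=
  Iff.rfl

instance : (gadget g).LocallyFinite := fun u ↦
  Fintype.subtype (neighbors u) fun _ ↦ Iff.rfl

theorem isRegularOfDegree : (gadget g).IsRegularOfDegree 3 := fun u ↦ by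
  rw [← SimpleGraph.card_neighborSet_eq_degree]
  exact (Fintype.card_of_subtype (neighbors u) fun _ ↦ Iff.rfl).trans (card_neighbors u)

theorem onTriangle_derived_iff_mem_gable (hg : g (Fin.last m) ≠ 1) {p : GadgetVertex m × G} :
    OnTriangle (gadget g).derived p ↔ p.1 ∈ gable := by
  obtain ⟨u, x⟩ := p
  simp only [onTriangle_derived_iff, adj_iff, mem_gable]
  constructor
  · rintro ⟨a, b, ha, hb, hab, hvol⟩
    cases u with
    | rail c i =>
      -- the triangle at the joint does not lift, since it has voltage `g (Fin.last m)`
      obtain ⟨rfl, ⟨rfl, rfl⟩ | ⟨rfl, rfl⟩⟩ := eq_joint_or_eq_joint_of_triangle_rail ha hb hab <;>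
        cases c <;> simp [gadget, hg, hg.symm] at hvol
    | _ =>
      simp only [mem_neighbors_roof, mem_neighbors_eaveL, mem_neighbors_eaveR,
        mem_neighbors_footL, mem_neighbors_footR, mem_neighbors_joint] at ha hb
      rcases ha with rfl | rfl | rfl <;> rcases hb with rfl | rfl | rfl <;>
        simp [gadget, hg] at hab hvol ⊢
  · rintro (rfl | rfl | rfl)
    · exact ⟨eaveL, eaveR, by simp [gadget]⟩
    · exact ⟨roof, eaveR, by simp [gadget]⟩
    · exact ⟨roof, eaveL, by simp [gadget]⟩

theorem not_onSquare_roof : ¬ OnSquare (gadget g).toSimpleGraph roof := by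
  rintro ⟨a, b, c, ha, hab, hbc, hc, hac, hb⟩
  replace hbc := hbc.symm
  replace hc := hc.symm
  rw [adj_iff] at hab hbc
  rw [adj_iff, mem_neighbors_roof] at ha hc
  rcases ha with rfl | rfl | rfl <;> rcases hc with rfl | rfl | rfl <;> cases b <;>
    simp at hab hbc hac hb

theorem onSquare_derived_eaveL (x : G) : OnSquare (gadget g).derived (eaveL, x) :=
  ⟨(eaveR, x), (footR, x), (footL, x), by simp [derived_adj, gadget]⟩

theorem onSquare_derived_eaveR (x : G) : OnSquare (gadget g).derived (eaveR, x) :=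
  ⟨(eaveL, x), (footL, x), (footR, x), by simp [derived_adj, gadget]⟩

end Local

section Automorphisms

variable {g : Fin (m + 1) → G} (φ : (gadget g).derived ≃g (gadget g).derived)

variable {φ} in
theorem fst_apply_mem_neighbors {p q : GadgetVertex m × G} (h : (gadget g).derived.Adj p q) :
    (φ q).1 ∈ neighbors (φ p).1 :=
  (φ.map_adj_iff.2 h).1

variable {φ} in
theorem preservesFiber_rail (hroof : PreservesFiber φ roof) (hfoot : PreservesFiber φ footL)
    (hstart : ∀ b, PreservesFiber φ (rail b 0)) (b : Bool) (i : Fin (m + 1)) :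
    PreservesFiber φ (rail b i) := by
  induction i using WellFoundedLT.induction generalizing b with
  | ind i ih =>
    cases i using Fin.cases with
    | zero => exact hstart b
    | succ i =>
      have hlt : i.castSucc < i.succ := i.castSucc_lt_succ
      refine (ih _ hlt b).of_adj (by simp [adj_iff]) fun w hw hne ↦ ?_
      rw [adj_iff, mem_neighbors_rail] at hw
      cases w with
      | roof => exact hroof
      | footL => exact hfoot
      | joint => exact absurd hw i.castSucc_ne_last
      | rail c j =>
        rcases hw with ⟨rfl, hj | hj⟩ | ⟨-, rfl⟩
        · exact ih j (by rw [Fin.val_castSucc] at hj; rw [Fin.lt_def, Fin.val_succ]; omega) b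
        · exact absurd (by simp [Fin.ext_iff, ← hj]) hne
        · exact ih _ hlt c
      | _ => exact hw.elim

theorem fst_apply_mem_gable_iff (hg : g (Fin.last m) ≠ 1) {p : GadgetVertex m × G} :
    (φ p).1 ∈ gable ↔ p.1 ∈ gable := by
  rw [← onTriangle_derived_iff_mem_gable hg, onTriangle_apply_iff,
    onTriangle_derived_iff_mem_gable hg]

theorem preservesFiber_roof (hg : g (Fin.last m) ≠ 1) : PreservesFiber φ roof := by
  intro x
  have htri : (φ (roof, x)).1 ∈ gable := (fst_apply_mem_gable_iff φ hg).2 (by simp)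
  have hsq : ¬ OnSquare (gadget g).derived (φ (roof, x)) :=
    (onSquare_apply_iff φ _).not.2 fun h ↦ not_onSquare_roof (onSquare_of_onSquare_derived h)
  generalize φ (roof, x) = p at htri hsq
  obtain ⟨u, y⟩ := p
  rcases mem_gable.1 htri with rfl | rfl | rfl
  · rfl
  · exact absurd (onSquare_derived_eaveL y) hsq
  · exact absurd (onSquare_derived_eaveR y) hsq

theorem preservesFiber_rail_false_zero (hg : g (Fin.last m) ≠ 1) :
    PreservesFiber φ (rail false 0) := by
  intro x
  have hmem : (φ (rail false 0, x)).1 ∈ neighbors (φ (roof, x)).1 :=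
    fst_apply_mem_neighbors (by simp [derived_adj, gadget])
  have htri : (φ (rail false 0, x)).1 ∉ gable := (fst_apply_mem_gable_iff φ hg).not.2 (by simp)
  rw [preservesFiber_roof φ hg x, mem_neighbors_roof] at hmem
  rw [mem_gable] at htri
  tauto

theorem fst_apply_footL_eq_footR (hg : g (Fin.last m) ≠ 1) {x : G}
    (heave : (φ (eaveL, x)).1 = eaveR) : (φ (footL, x)).1 = footR := by
  have hmem : (φ (footL, x)).1 ∈ neighbors (φ (eaveL, x)).1 :=
    fst_apply_mem_neighbors (by simp [derived_adj, gadget])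
  have htri : (φ (footL, x)).1 ∉ gable := (fst_apply_mem_gable_iff φ hg).not.2 (by simp)
  rw [heave, mem_neighbors_eaveR] at hmem
  rw [mem_gable] at htri
  tauto

theorem fst_apply_rail_true_zero_eq_joint (hg : g (Fin.last m) ≠ 1) {x : G}
    (hfoot : (φ (footL, x)).1 = footR) :
    (φ (rail true 0, x)).1 = joint ∧ Fin.last m = 0 := by
  have hmem : (φ (rail true 0, x)).1 ∈ neighbors (φ (footL, x)).1 :=
    fst_apply_mem_neighbors (by simp [derived_adj, gadget])
  have hrung : (φ (rail false 0, x * (g 0)⁻¹)).1 ∈ neighbors (φ (rail true 0, x)).1 :=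
    fst_apply_mem_neighbors (by simp [derived_adj, gadget])
  have htri : (φ (rail true 0, x)).1 ∉ gable := (fst_apply_mem_gable_iff φ hg).not.2 (by simp)
  rw [preservesFiber_rail_false_zero φ hg] at hrung
  rw [hfoot, mem_neighbors_footR] at hmem
  rcases hmem with h | h | h <;> rw [h] at hrung htri
  · simp at htri
  · simp at hrung
  · exact ⟨h, by simpa [eq_comm] using hrung⟩

/-- If the house were reflected, the image of the walk `roof`, `eaveL`, `footL`, `rail true 0`,
`rail false 0` would avoid the rungs, although the walk crosses the rung of voltage `g 0`. -/
theorem fst_apply_eaveL_ne_eaveR (hg : g (Fin.last m) ≠ 1) (x : G) :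
    (φ (eaveL, x)).1 ≠ eaveR := by
  intro heave
  have hfoot := fst_apply_footL_eq_footR φ hg heave
  obtain ⟨hjoint, hlast⟩ := fst_apply_rail_true_zero_eq_joint φ hg hfoot
  have hroof := preservesFiber_roof φ hg x
  have hrail := preservesFiber_rail_false_zero φ hg
  have himage {p q : GadgetVertex m × G} (h : (gadget g).derived.Adj p q) :
      (φ q).2 = (φ p).2 * (gadget g).voltage (φ p).1 (φ q).1 :=
    (φ.map_adj_iff.2 h).2
  have hwalk : (φ (rail false 0, x * (g 0)⁻¹)).2 = (φ (roof, x)).2 := by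
    rw [himage (p := (rail true 0, x)) (by simp [derived_adj, gadget]),
      himage (p := (footL, x)) (by simp [derived_adj, gadget]),
      himage (p := (eaveL, x)) (by simp [derived_adj, gadget]),
      himage (p := (roof, x)) (by simp [derived_adj, gadget]),
      hroof, heave, hfoot, hjoint, hrail]
    simp [gadget]
  have hedge : (φ (rail false 0, x)).2 = (φ (roof, x)).2 := by
    rw [himage (p := (roof, x)) (by simp [derived_adj, gadget]), hroof, hrail]
    simp [gadget]
  have heq := φ.injective (Prod.ext ((hrail _).trans (hrail _).symm) (hwalk.trans hedge.symm))
  exact hg (by simpa [hlast] using heq)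

theorem preservesFiber_eaveL (hg : g (Fin.last m) ≠ 1) : PreservesFiber φ eaveL := by
  intro x
  have hmem : (φ (eaveL, x)).1 ∈ neighbors (φ (roof, x)).1 :=
    fst_apply_mem_neighbors (by simp [derived_adj, gadget])
  have htri : (φ (eaveL, x)).1 ∈ gable := (fst_apply_mem_gable_iff φ hg).2 (by simp)
  rw [preservesFiber_roof φ hg x, mem_neighbors_roof] at hmem
  rcases hmem with h | h | h
  · exact h
  · exact absurd h (fst_apply_eaveL_ne_eaveR φ hg x)
  · simp [h] at htri

theorem preservesFiber (hg : g (Fin.last m) ≠ 1) (u : GadgetVertex m) : PreservesFiber φ u := by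
  have hroof := preservesFiber_roof φ hg
  have hrail₀ := preservesFiber_rail_false_zero φ hg
  have heaveL := preservesFiber_eaveL φ hg
  have heaveR : PreservesFiber φ eaveR := hroof.of_adj (by simp [adj_iff]) fun w hw hne ↦ by
    rcases mem_neighbors_roof.1 hw with rfl | rfl | rfl
    exacts [heaveL, absurd rfl hne, hrail₀]
  have hfootL : PreservesFiber φ footL := heaveL.of_adj (by simp [adj_iff]) fun w hw hne ↦ by
    rcases mem_neighbors_eaveL.1 hw with rfl | rfl | rfl
    exacts [hroof, heaveR, absurd rfl hne]
  have hfootR : PreservesFiber φ footR := heaveR.of_adj (by simp [adj_iff]) fun w hw hne ↦ by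
    rcases mem_neighbors_eaveR.1 hw with rfl | rfl | rfl
    exacts [hroof, heaveL, absurd rfl hne]
  have hrail₁ : PreservesFiber φ (rail true 0) :=
    hfootL.of_adj (by simp [adj_iff]) fun w hw hne ↦ by
      rcases mem_neighbors_footL.1 hw with rfl | rfl | rfl
      exacts [heaveL, hfootR, absurd rfl hne]
  have hjoint : PreservesFiber φ joint := hfootR.of_adj (by simp [adj_iff]) fun w hw hne ↦ by
    rcases mem_neighbors_footR.1 hw with rfl | rfl | rfl
    exacts [heaveR, hfootL, absurd rfl hne]
  cases u with
  | rail b i => exact preservesFiber_rail hroof hfootL (Bool.forall_bool.2 ⟨hrail₀, hrail₁⟩) b i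
  | _ => assumption

end Automorphisms

section Connectivity

variable {g : Fin (m + 1) → G}

variable (g) in
theorem reachable_roof (u : GadgetVertex m) (x : G) :
    (gadget g).derived.Reachable (roof, x) (u, x) := by
  have hadj {u v : GadgetVertex m} (huv : v ∈ neighbors u) (hvol : (gadget g).voltage u v = 1) :
      (gadget g).derived.Reachable (u, x) (v, x) :=
    SimpleGraph.Adj.reachable ⟨huv, by simp [hvol]⟩
  have heaveL := hadj (u := roof) (v := eaveL) (by simp) rfl
  have heaveR := hadj (u := roof) (v := eaveR) (by simp) rfl
  have hfootL := heaveL.trans (hadj (v := footL) (by simp) rfl)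
  have hfootR := heaveR.trans (hadj (v := footR) (by simp) rfl)
  have hjoint := hfootR.trans (hadj (v := joint) (by simp) rfl)
  have hrail (b : Bool) (i : Fin (m + 1)) :
      (gadget g).derived.Reachable (roof, x) (rail b i, x) := by
    induction i using Fin.induction with
    | zero =>
      cases b
      · exact hadj (by simp) rfl
      · exact hfootL.trans (hadj (by simp) rfl)
    | succ i ih => exact ih.trans (hadj (by simp) (by cases b <;> rfl))
  cases u with
  | roof => rfl
  | rail b i => exact hrail b i
  | _ => assumption

theorem derived_preconnected (hgen : Subgroup.closure (Set.range g) = ⊤) :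
    (gadget g).derived.Preconnected := by
  refine VoltageGraph.derived_preconnected hgen roof (reachable_roof g) ?_
  rintro _ ⟨i, rfl⟩ x
  have hrung : (gadget g).derived.Adj (rail false i, x) (rail true i, x * g i) := by
    simp [derived_adj, gadget]
  exact (reachable_roof g _ x).trans (hrung.reachable.trans (reachable_roof g _ (x * g i)).symm)

theorem nonempty_aut_derived_mulEquiv (hg : g (Fin.last m) ≠ 1)
    (hgen : Subgroup.closure (Set.range g) = ⊤) :
    Nonempty (((gadget g).derived ≃g (gadget g).derived) ≃* G) :=
  have : Nonempty (GadgetVertex m) := ⟨roof⟩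
  ⟨(MulEquiv.ofBijective _ (translate_bijective (derived_preconnected hgen)
    fun φ ↦ preservesFiber φ hg)).symm⟩

end Connectivity

end gadget

end Construction

theorem exists_cubic_graph_on_card_aut_mulEquiv_general {n : ℕ} {G V : Type*} [Group G]
    [Nontrivial G] (g : Fin n → G) (hgen : Subgroup.closure (Set.range g) = ⊤)
    (ε : Fin (2 * n + 6) × G ≃ V) :
    ∃ (Γ : SimpleGraph V) (_ : Γ.LocallyFinite),
      Γ.IsRegularOfDegree 3 ∧ Nonempty ((Γ ≃g Γ) ≃* G) := by
  obtain ⟨i, hi⟩ := exists_apply_ne_one_of_closure_range_eq_top hgen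
  obtain ⟨m, rfl⟩ := Nat.exists_eq_add_one.2 i.pos
  let g' : Fin (m + 1) → G := g ∘ Equiv.swap (Fin.last m) i
  have hg' : g' (Fin.last m) ≠ 1 := by simpa [g'] using hi
  have hgen' : Subgroup.closure (Set.range g') = ⊤ := by rwa [EquivLike.range_comp]
  exact exists_isRegularOfDegree_aut_mulEquiv_of_equiv
    ((GadgetVertex.equivFin.prodCongr (Equiv.refl G)).trans ε)
    (VoltageGraph.isRegularOfDegree_derived gadget.isRegularOfDegree)
    (gadget.nonempty_aut_derived_mulEquiv hg' hgen')

open scoped Classical in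
/-- For `n > 2` and a finite group `G` generated by `n` pairwise distinct non-identity
elements, there is a cubic (3-regular) finite simple graph on exactly `(2n+6) * |G|`
vertices whose automorphism group is isomorphic to `G`. -/
theorem exists_cubic_graph_on_card_aut_mulEquiv
    (n : ℕ) (hn : 2 < n) (G : Type*) [Group G] [Fintype G] (g : Fin n → G)
    (hinj : Function.Injective g) (hne : ∀ i, g i ≠ 1)
    (hgen : Subgroup.closure (Set.range g) = ⊤) :
    ∃ Γ : SimpleGraph (Fin ((2 * n + 6) * Fintype.card G)),
      Γ.IsRegularOfDegree 3 ∧ Nonempty ((Γ ≃g Γ) ≃* G) := by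
  have : Nontrivial G := ⟨_, _, hne ⟨0, by omega⟩⟩
  obtain ⟨Γ, _, hreg, haut⟩ := exists_cubic_graph_on_card_aut_mulEquiv_general g hgen
    (Fintype.equivFinOfCardEq (n := (2 * n + 6) * Fintype.card G) (by simp))
  exact ⟨Γ, by convert hreg, haut⟩
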